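/- arXiv:1605.01790 — 5 statements merged into one kernel-verified Lean document; each statement's English description precedes it below -/
import Mathlib

section
/- Let S ∈ ℂ^{pq×pq}, and let A ∈ ℂ^{p×p} with A ≠ 0. Define R_B := (Σ_{i,j=1}^p conj(a_{ij}) S(i,j)) / ‖A‖_F² ∈ ℂ^{q×q}. Then for every B ∈ ℂ^{q×q}: ‖S − A⊗B‖_F² = ‖A‖_F² ‖B − R_B‖_F² + ‖S‖_F² − ‖A‖_F² ‖R_B‖_F². -/
open Matrix Kronecker BigOperators

/-- Squared Frobenius norm of a complex matrix. -/
noncomputable def frobSq {m n : Type*} [Fintype m] [Fintype n] (M : Matrix m n ℂ) : ℝ :=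
  ∑ i, ∑ j, Complex.normSq (M i j)

/-- The (i,j)-th q×q block of a pq×pq matrix. -/
def blk {p q : ℕ} (S : Matrix (Fin p × Fin q) (Fin p × Fin q) ℂ) (i j : Fin p) :
    Matrix (Fin q) (Fin q) ℂ := Matrix.of fun k l => S (i, k) (j, l)

/-! With respect to the Frobenius inner product `⟪M, N⟫ = tr (Mᴴ N)`, the adjoint of `B ↦ A ⊗ₖ B`
sends `S` to `∑ i j, conj (A i j) • S(i, j) = ‖A‖² • R_B`. Expanding `‖S - A ⊗ₖ B‖²` and moving
`A` across the inner product gives `‖S‖² - 2 ‖A‖² Re ⟪B, R_B⟫ + ‖A‖² ‖B‖²`; completing the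
square in `B` is the claim. -/

section FrobeniusInner

variable {m n k l : Type*} [Fintype m] [Fintype n]

/-- The image of `S` under the adjoint of `B ↦ A ⊗ₖ B` for the Frobenius inner product
`tr (Mᴴ N)`, namely `∑ i j, conj (A i j) • S(i, j)`. The block `S(i, j)` is written as a submatrix
so that the blocks may be rectangular. -/
def kroneckerAdjoint (A : Matrix m n ℂ) (S : Matrix (m × k) (n × l) ℂ) : Matrix k l ℂ :=
  ∑ i, ∑ j, (starRingEnd ℂ) (A i j) • S.submatrix (Prod.mk i) (Prod.mk j)

variable [Fintype k] [Fintype l]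

lemma trace_conjTranspose_mul_eq_sum (M N : Matrix m n ℂ) :
    trace (Mᴴ * N) = ∑ i, ∑ j, (starRingEnd ℂ) (M i j) * N i j := by
  simp only [trace, diag_apply, mul_apply, conjTranspose_apply, starRingEnd_apply]
  exact Finset.sum_comm

lemma ofReal_frobSq (M : Matrix m n ℂ) : (frobSq M : ℂ) = trace (Mᴴ * M) := by
  simp only [trace_conjTranspose_mul_eq_sum, frobSq, Complex.ofReal_sum,
    Complex.normSq_eq_conj_mul_self]

lemma frobSq_eq_re_trace (M : Matrix m n ℂ) : frobSq M = (trace (Mᴴ * M)).re := by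
  rw [← ofReal_frobSq, Complex.ofReal_re]

open scoped ComplexOrder in
lemma frobSq_eq_zero_iff {M : Matrix m n ℂ} : frobSq M = 0 ↔ M = 0 := by
  rw [← Complex.ofReal_eq_zero, ofReal_frobSq, trace_conjTranspose_mul_self_eq_zero_iff]

lemma frobSq_kronecker (A : Matrix m n ℂ) (B : Matrix k l ℂ) :
    frobSq (A ⊗ₖ B) = frobSq A * frobSq B := by
  apply Complex.ofReal_injective
  rw [Complex.ofReal_mul]
  simp only [ofReal_frobSq, conjTranspose_kronecker, ← mul_kronecker_mul, trace_kronecker]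

lemma re_trace_conjTranspose_mul_comm (M N : Matrix m n ℂ) :
    (trace (Mᴴ * N)).re = (trace (Nᴴ * M)).re := by
  rw [← Complex.conj_re, starRingEnd_apply, ← trace_conjTranspose, conjTranspose_mul,
    conjTranspose_conjTranspose]

lemma frobSq_sub (M N : Matrix m n ℂ) :
    frobSq (M - N) = frobSq M + frobSq N - 2 * (trace (Nᴴ * M)).re := by
  simp only [frobSq_eq_re_trace, conjTranspose_sub, Matrix.sub_mul, Matrix.mul_sub, trace_sub,
    Complex.sub_re, re_trace_conjTranspose_mul_comm M N]
  ring

lemma trace_conjTranspose_kronecker_mul (A : Matrix m n ℂ) (B : Matrix k l ℂ)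
    (S : Matrix (m × k) (n × l) ℂ) :
    trace ((A ⊗ₖ B)ᴴ * S) = trace (Bᴴ * kroneckerAdjoint A S) := by
  calc trace ((A ⊗ₖ B)ᴴ * S)
    _ = ∑ i, ∑ x, ∑ j, ∑ y,
          (starRingEnd ℂ) (A i j) * ((starRingEnd ℂ) (B x y) * S (i, x) (j, y)) := by
      simp only [trace_conjTranspose_mul_eq_sum, Fintype.sum_prod_type, kroneckerMap_apply,
        map_mul, mul_assoc]
    _ = ∑ i, ∑ j, ∑ x, ∑ y,
          (starRingEnd ℂ) (A i j) * ((starRingEnd ℂ) (B x y) * S (i, x) (j, y)) :=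
      Finset.sum_congr rfl fun _ _ ↦ Finset.sum_comm
    _ = ∑ i, ∑ j, (starRingEnd ℂ) (A i j) *
          trace (Bᴴ * S.submatrix (Prod.mk i) (Prod.mk j)) := by
      simp only [trace_conjTranspose_mul_eq_sum, submatrix_apply, Finset.mul_sum]
    _ = trace (Bᴴ * kroneckerAdjoint A S) := by
      simp only [kroneckerAdjoint, Matrix.mul_sum, trace_sum, Matrix.mul_smul, trace_smul,
        smul_eq_mul]

lemma frobSq_sub_kronecker (S : Matrix (m × k) (n × l) ℂ) (A : Matrix m n ℂ)
    (B : Matrix k l ℂ) :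
    frobSq (S - A ⊗ₖ B) =
      frobSq S + frobSq A * frobSq B - 2 * (trace (Bᴴ * kroneckerAdjoint A S)).re := by
  rw [frobSq_sub, frobSq_kronecker, trace_conjTranspose_kronecker_mul]

theorem frobSq_sub_kronecker_eq_of_RB_general (S : Matrix (m × k) (n × l) ℂ)
    (A : Matrix m n ℂ) (hA : A ≠ 0) (RB : Matrix k l ℂ)
    (hRB : RB = (frobSq A : ℂ)⁻¹ • kroneckerAdjoint A S) (B : Matrix k l ℂ) :
    frobSq (S - A ⊗ₖ B) =
      frobSq A * frobSq (B - RB) + frobSq S - frobSq A * frobSq RB := by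
  have frobSq_ne_zero : (frobSq A : ℂ) ≠ 0 :=
    Complex.ofReal_ne_zero.mpr (frobSq_eq_zero_iff.not.mpr hA)
  have adjoint_eq : kroneckerAdjoint A S = (frobSq A : ℂ) • RB := by
    rw [hRB, smul_inv_smul₀ frobSq_ne_zero]
  have cross_term : (trace (Bᴴ * kroneckerAdjoint A S)).re =
      frobSq A * (trace (RBᴴ * B)).re := by
    rw [adjoint_eq, Matrix.mul_smul, trace_smul, smul_eq_mul, Complex.re_ofReal_mul,
      re_trace_conjTranspose_mul_comm]
  rw [frobSq_sub_kronecker, cross_term, frobSq_sub]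
  ring

end FrobeniusInner

/-- For fixed nonzero A, with R_B = (Σᵢⱼ conj(aᵢⱼ) S(i,j)) / ‖A‖_F², the objective decomposes as
‖S − A⊗B‖_F² = ‖A‖_F² ‖B − R_B‖_F² + ‖S‖_F² − ‖A‖_F² ‖R_B‖_F² for every B. -/
theorem frobSq_sub_kronecker_eq_of_RB {p q : ℕ}
    (S : Matrix (Fin p × Fin q) (Fin p × Fin q) ℂ)
    (A : Matrix (Fin p) (Fin p) ℂ) (hA : A ≠ 0)
    (RB : Matrix (Fin q) (Fin q) ℂ)
    (hRB : RB = ((frobSq A : ℂ))⁻¹ • ∑ i, ∑ j, (starRingEnd ℂ) (A i j) • blk S i j)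
    (B : Matrix (Fin q) (Fin q) ℂ) :
    frobSq (S - A ⊗ₖ B) =
      frobSq A * frobSq (B - RB) + frobSq S - frobSq A * frobSq RB :=
  frobSq_sub_kronecker_eq_of_RB_general S A hA RB hRB B
end

section
/- Let S ∈ ℂ^{pq×pq} be Hermitian positive semidefinite, and let A ∈ ℂ^{p×p} be Hermitian positive semidefinite. Then the matrix Σ_{i,j=1}^p conj(a_{ij}) S(i,j) ∈ ℂ^{q×q} is Hermitian positive semidefinite. -/
open Matrix Kronecker BigOperators ComplexOrder

/-! The Schur product of `S` with the matrix that repeats `conj (A i j)` over the whole `(i, j)`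
block is positive semidefinite, and its blocks are the summands `conj (A i j) • S(i, j)`. The sum
of all blocks of a positive semidefinite matrix `T` is positive semidefinite, because its quadratic
form at `x` is that of `T` at the vector `(x, …, x)`. -/

theorem isHermitian_sum_sum_submatrix {R m n ι : Type*} [AddCommMonoid R] [StarAddMonoid R]
    {M : Matrix n n R} (hM : M.IsHermitian) (s : Finset ι) (e : ι → m → n) :
    (∑ i ∈ s, ∑ j ∈ s, M.submatrix (e i) (e j)).IsHermitian := by
  simp only [IsHermitian, conjTranspose_sum, conjTranspose_submatrix, hM.eq]
  exact Finset.sum_comm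

theorem sum_sum_star_mul_sum_sum_submatrix_mul {R m n ι : Type*} [NonUnitalNonAssocSemiring R]
    [StarRing R] (M : Matrix n n R) (s : Finset ι) (e : ι → m → n) (x : m →₀ R) :
    (x.sum fun k xk ↦ x.sum fun l xl ↦
      star xk * (∑ i ∈ s, ∑ j ∈ s, M.submatrix (e i) (e j)) k l * xl) =
    (∑ i ∈ s, x.mapDomain (e i)).sum fun a ya ↦
      (∑ j ∈ s, x.mapDomain (e j)).sum fun b yb ↦ star ya * M a b * yb := by
  simp only [Matrix.sum_apply, submatrix_apply, Finset.mul_sum, Finset.sum_mul,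
    Finsupp.sum_finsetSum_comm, mul_zero, implies_true, mul_add, ← Finsupp.sum_finsetSum_index,
    Finsupp.sum_mapDomain_index, star_zero, zero_mul, Finsupp.sum_fun_zero, star_add, add_mul,
    Finsupp.sum_add]
  exact Finset.sum_comm

theorem posSemidef_sum_sum_submatrix {R m n ι : Type*} [Ring R] [PartialOrder R] [StarRing R]
    {M : Matrix n n R} (hM : M.PosSemidef) (s : Finset ι) (e : ι → m → n) :
    (∑ i ∈ s, ∑ j ∈ s, M.submatrix (e i) (e j)).PosSemidef := by
  refine ⟨isHermitian_sum_sum_submatrix hM.isHermitian s e, fun x ↦ ?_⟩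
  rw [sum_sum_star_mul_sum_sum_submatrix_mul]
  exact hM.2 (∑ i ∈ s, x.mapDomain (e i))

theorem posSemidef_sum_conj_smul_blocks_general {𝕜 ι κ : Type*} [RCLike 𝕜] [Fintype ι]
    {S : Matrix (ι × κ) (ι × κ) 𝕜} (hS : S.PosSemidef)
    {A : Matrix ι ι 𝕜} (hA : A.PosSemidef) :
    (∑ i, ∑ j, (starRingEnd 𝕜) (A i j) •
      S.submatrix (Prod.mk i) (Prod.mk j)).PosSemidef := by
  have conj_posSemidef : (A.map (starRingEnd 𝕜)).PosSemidef := hA.conjTranspose.transpose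
  have schur_posSemidef :
      ((A.map (starRingEnd 𝕜)).submatrix Prod.fst Prod.fst ⊙ S).PosSemidef :=
    (conj_posSemidef.submatrix Prod.fst).hadamard hS
  exact posSemidef_sum_sum_submatrix schur_posSemidef Finset.univ Prod.mk

/-- If S and A are Hermitian positive semidefinite, then Σᵢⱼ conj(aᵢⱼ) S(i,j) is
Hermitian positive semidefinite. -/
theorem posSemidef_sum_conj_smul_blocks {p q : ℕ}
    (S : Matrix (Fin p × Fin q) (Fin p × Fin q) ℂ) (hS : S.PosSemidef)
    (A : Matrix (Fin p) (Fin p) ℂ) (hA : A.PosSemidef) :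
    (∑ i, ∑ j, (starRingEnd ℂ) (A i j) • blk S i j).PosSemidef :=
  posSemidef_sum_conj_smul_blocks_general hS hA
end

section
/- Let S ∈ ℂ^{pq×pq} be Hermitian positive semidefinite, and let B ∈ ℂ^{q×q} be Hermitian positive semidefinite. Then the matrix R_A ∈ ℂ^{p×p} with entries (R_A)_{ij} = tr(B^H S(i,j)) is Hermitian positive semidefinite. -/
open Matrix Kronecker BigOperators ComplexOrder

/-!
Write `B = ∑ t, v t (v t)ᴴ`. Then `tr (Bᴴ S(i,j)) = ∑ t, (v t)ᴴ S(i,j) (v t)`, and for each `t` the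
matrix with entries `(v t)ᴴ S(i,j) (v t)` is positive semidefinite, because its quadratic form at
`x` is the quadratic form of `S` at `x ⊗ v t`.
-/

lemma trace_vecMulVec_mul {n R : Type*} [Fintype n] [NonUnitalCommSemiring R]
    (v w : n → R) (M : Matrix n n R) : (vecMulVec v w * M).trace = w ⬝ᵥ (M *ᵥ v) := by
  rw [vecMulVec_mul, trace_vecMulVec, dotProduct_comm, dotProduct_mulVec]

section FinsuppTensor

variable {m n R : Type*} [Fintype n] [MulZeroClass R]

/-- The elementary tensor `x ⊗ v`, with the entries of `v` on the left so that its quadratic form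
is that of a compression also over a noncommutative ring. -/
noncomputable def finsuppTensor (x : m →₀ R) (v : n → R) : m × n →₀ R :=
  Finsupp.onFinset (x.support ×ˢ Finset.univ) (fun a => v a.2 * x a.1) fun a ha => by
    simpa using right_ne_zero_of_mul ha

lemma sum_finsuppTensor {M : Type*} [AddCommMonoid M] (x : m →₀ R) (v : n → R)
    {f : m × n → R → M} (hf : ∀ a, f a 0 = 0) :
    (finsuppTensor x v).sum f = x.sum fun i xi => ∑ k, f (i, k) (v k * xi) := by
  rw [finsuppTensor, Finsupp.onFinset_sum _ hf, Finset.sum_product]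
  rfl

end FinsuppTensor

section BlockCompression

variable {m n R : Type*} [Fintype n] [Ring R] [StarRing R]

/-- The compression `(1 ⊗ v)ᴴ S (1 ⊗ v)` of a block matrix `S` along a vector `v`: its `(i,j)` entry
is `vᴴ S(i,j) v`, where the block `S(i,j)` is written as a submatrix of `S`. It is given entrywise
so that the set `m` of block indices may be infinite. -/
def blockCompression (S : Matrix (m × n) (m × n) R) (v : n → R) : Matrix m m R :=
  Matrix.of fun i j => star v ⬝ᵥ (S.submatrix (Prod.mk i) (Prod.mk j) *ᵥ v)

lemma blockCompression_apply (S : Matrix (m × n) (m × n) R) (v : n → R) (i j : m) :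
    blockCompression S v i j = star v ⬝ᵥ (S.submatrix (Prod.mk i) (Prod.mk j) *ᵥ v) :=
  rfl

lemma isHermitian_blockCompression {S : Matrix (m × n) (m × n) R} (hS : S.IsHermitian)
    (v : n → R) : (blockCompression S v).IsHermitian := by
  ext i j
  rw [conjTranspose_apply, blockCompression_apply, blockCompression_apply, star_dotProduct,
    star_star, star_mulVec, conjTranspose_submatrix, hS.eq, dotProduct_mulVec]

lemma sum_blockCompression (S : Matrix (m × n) (m × n) R) (v : n → R) (x : m →₀ R) :
    (x.sum fun i xi => x.sum fun j xj => star xi * blockCompression S v i j * xj) =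
      (finsuppTensor x v).sum fun a xa => (finsuppTensor x v).sum fun b xb =>
        star xa * S a b * xb := by
  simp only [sum_finsuppTensor, star_zero, zero_mul, mul_zero, Finsupp.sum_fun_zero, implies_true,
    Finsupp.sum_finsetSum_comm, star_mul, blockCompression_apply, dotProduct, mulVec, Pi.star_apply,
    submatrix_apply, Finset.mul_sum, Finset.sum_mul, mul_assoc]
  exact Finset.sum_comm

theorem posSemidef_blockCompression [PartialOrder R] {S : Matrix (m × n) (m × n) R}
    (hS : S.PosSemidef) (v : n → R) : (blockCompression S v).PosSemidef :=
  ⟨isHermitian_blockCompression hS.isHermitian v, fun x => by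
    rw [sum_blockCompression]
    exact hS.2 (finsuppTensor x v)⟩

end BlockCompression

theorem posSemidef_traceMatrix_general {m n 𝕜 : Type*} [Fintype n] [RCLike 𝕜]
    {S : Matrix (m × n) (m × n) 𝕜} (hS : S.PosSemidef) {B : Matrix n n 𝕜} (hB : B.PosSemidef) :
    (Matrix.of fun i j => (Bᴴ * S.submatrix (Prod.mk i) (Prod.mk j)).trace).PosSemidef := by
  obtain ⟨r, v, hv⟩ := posSemidef_iff_eq_sum_vecMulVec.mp hB
  have htrace : (Matrix.of fun i j => (Bᴴ * S.submatrix (Prod.mk i) (Prod.mk j)).trace) =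
      ∑ t, blockCompression S (v t) := by
    ext i j
    rw [of_apply, hB.isHermitian.eq, hv, Finset.sum_mul, trace_sum, Matrix.sum_apply]
    simp only [trace_vecMulVec_mul, blockCompression_apply]
  rw [htrace]
  exact posSemidef_sum _ fun t _ => posSemidef_blockCompression hS (v t)

/-- If S and B are Hermitian positive semidefinite, then the matrix R_A with entries
(R_A)ᵢⱼ = tr(Bᴴ S(i,j)) is Hermitian positive semidefinite. -/
theorem posSemidef_traceMatrix {p q : ℕ}
    (S : Matrix (Fin p × Fin q) (Fin p × Fin q) ℂ) (hS : S.PosSemidef)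
    (B : Matrix (Fin q) (Fin q) ℂ) (hB : B.PosSemidef) :
    (Matrix.of fun i j => (Bᴴ * blk S i j).trace : Matrix (Fin p) (Fin p) ℂ).PosSemidef :=
  posSemidef_traceMatrix_general hS hB
end

section
/- A matrix M ∈ ℂ^{pq×pq} is a Kronecker product if and only if its rearrangement has rank at most one: rank(R(M)) ≤ 1 if and only if there exist A ∈ ℂ^{p×p} and B ∈ ℂ^{q×q} such that M = A⊗B. -/
open Matrix Kronecker BigOperators

/-- The Pitsianis–Van Loan rearrangement operator: the ((i,j))-th row of R(M) is
vec(M(i,j))ᵀ, where M(i,j) is the (i,j)-th q×q block of M. -/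
def rearrange {p q : ℕ} (M : Matrix (Fin p × Fin q) (Fin p × Fin q) ℂ) :
    Matrix (Fin p × Fin p) (Fin q × Fin q) ℂ :=
  Matrix.of fun ij kl => M (ij.1, kl.2) (ij.2, kl.1)

section RankOne

variable {R m n : Type*} [CommRing R] [IsDomain R] [IsPrincipalIdealRing R] [Fintype n]

-- Over a principal ideal domain the column space is free, so rank at most one makes it cyclic.
theorem exists_eq_vecMulVec_of_rank_le_one {M : Matrix m n R} (hM : M.rank ≤ 1) :
    ∃ (w : m → R) (v : n → R), M = vecMulVec w v := by
  have : Module.Finite R (Submodule.span R (Set.range M.col)) :=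
    .span_of_finite R (Set.finite_range M.col)
  rw [rank_eq_finrank_span_cols, Submodule.finrank_le_one_iff_isPrincipal] at hM
  obtain ⟨w, hw⟩ := hM
  have col_eq_smul (j : n) : ∃ c : R, c • w = M.col j := by
    rw [← Submodule.mem_span_singleton, ← hw]
    exact Submodule.subset_span ⟨j, rfl⟩
  choose v hv using col_eq_smul
  refine ⟨w, v, Matrix.ext fun i j => ?_⟩
  calc M i j = (v j • w) i := (congrFun (hv j) i).symm
    _ = vecMulVec w v i j := mul_comm _ _

theorem rank_le_one_iff_exists_eq_vecMulVec {M : Matrix m n R} :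
    M.rank ≤ 1 ↔ ∃ (w : m → R) (v : n → R), M = vecMulVec w v := by
  refine ⟨exists_eq_vecMulVec_of_rank_le_one, ?_⟩
  rintro ⟨w, v, rfl⟩
  exact rank_vecMulVec_le w v

end RankOne

section BlockRearrange

variable {R l m n o : Type*}

/-- The rearrangement operator for a matrix partitioned into `n × o` blocks indexed by `l × m`:
row `(i, j)` is the vectorization of block `(i, j)`. Since `Matrix.vec` stacks columns,
the column index of the block comes first in `o × n`. -/
def blockRearrange (M : Matrix (l × n) (m × o) R) : Matrix (l × m) (o × n) R :=
  of fun ij => vec (of fun r s => M (ij.1, r) (ij.2, s))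

theorem blockRearrange_injective :
    Function.Injective (blockRearrange : Matrix (l × n) (m × o) R → _) := by
  intro M N h
  ext ⟨i, r⟩ ⟨j, s⟩
  exact congrFun₂ h (i, j) (s, r)

theorem blockRearrange_kronecker [Mul R] (A : Matrix l m R) (B : Matrix n o R) :
    blockRearrange (A ⊗ₖ B) = vecMulVec (vec Aᵀ) (vec B) :=
  rfl

theorem blockRearrange_eq_vecMulVec_iff [Mul R] {M : Matrix (l × n) (m × o) R}
    {A : Matrix l m R} {B : Matrix n o R} :
    blockRearrange M = vecMulVec (vec Aᵀ) (vec B) ↔ M = A ⊗ₖ B := by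
  rw [← blockRearrange_kronecker, blockRearrange_injective.eq_iff]

theorem rank_rearrange_le_one_iff_kronecker_general [CommRing R] [IsDomain R]
    [IsPrincipalIdealRing R] [Fintype n] [Fintype o] (M : Matrix (l × n) (m × o) R) :
    (blockRearrange M).rank ≤ 1 ↔
      ∃ (A : Matrix l m R) (B : Matrix n o R), M = A ⊗ₖ B := by
  have vec_transpose_surjective : Function.Surjective fun A : Matrix l m R => vec Aᵀ :=
    vec_bijective.surjective.comp (transposeAddEquiv l m R).surjective
  calc (blockRearrange M).rank ≤ 1
      ↔ ∃ (w : l × m → R) (v : o × n → R), blockRearrange M = vecMulVec w v :=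
        rank_le_one_iff_exists_eq_vecMulVec
    _ ↔ ∃ (A : Matrix l m R) (B : Matrix n o R),
          blockRearrange M = vecMulVec (vec Aᵀ) (vec B) := by
        simp only [vec_transpose_surjective.exists, vec_bijective.surjective.exists]
    _ ↔ ∃ (A : Matrix l m R) (B : Matrix n o R), M = A ⊗ₖ B := by
        simp only [blockRearrange_eq_vecMulVec_iff]

end BlockRearrange

theorem rearrange_eq_blockRearrange {p q : ℕ} (M : Matrix (Fin p × Fin q) (Fin p × Fin q) ℂ) :
    rearrange M = blockRearrange M :=
  rfl

/-- A matrix is a Kronecker product if and only if its rearrangement has rank at most one. -/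
theorem rank_rearrange_le_one_iff_kronecker {p q : ℕ}
    (M : Matrix (Fin p × Fin q) (Fin p × Fin q) ℂ) :
    (rearrange M).rank ≤ 1 ↔
      ∃ (A : Matrix (Fin p) (Fin p) ℂ) (B : Matrix (Fin q) (Fin q) ℂ), M = A ⊗ₖ B := by
  rw [rearrange_eq_blockRearrange]
  exact rank_rearrange_le_one_iff_kronecker_general M
end

section
/- The minimum of the unconstrained Kronecker approximation problem is determined by the largest singular value of the rearranged matrix: for every S ∈ ℂ^{pq×pq}, letting σ₁² denote the largest eigenvalue of R(S)^H R(S), one has ‖S − A⊗B‖_F² ≥ ‖S‖_F² − σ₁² for all A ∈ ℂ^{p×p} and B ∈ ℂ^{q×q}, and there exist Â ∈ ℂ^{p×p} and B̂ ∈ ℂ^{q×q} attaining ‖S − Â⊗B̂‖_F² = ‖S‖_F² − σ₁². -/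
open Matrix Kronecker BigOperators

/-! Rearrangement is a Frobenius isometry that turns `A ⊗ₖ B` into the rank-one matrix
`vec Aᵀ (vec B)ᵀ`, so the problem is the best rank-one approximation of `N = R(S)`. Expanding,
`‖N - a vᴴ‖² = ‖N‖² - 2 Re ⟪a, N v⟫ + ‖a‖² ‖v‖²`. Since `‖N v‖² ≤ σ₁² ‖v‖²`, Cauchy–Schwarz and
AM-GM bound the cross term by `σ₁² + ‖a‖² ‖v‖²`; equality holds when `v` is a unit top eigenvector
of `Nᴴ N` and `a = N v`.
-/

section GramEigenvalues

variable {𝕜 m n : Type*} [RCLike 𝕜] [Fintype m] [Fintype n] [DecidableEq n] {N : Matrix m n 𝕜}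

lemma inner_eigenvectorBasis_toEuclideanLin {H : Matrix n n 𝕜} (hH : H.IsHermitian) (i : n)
    (v : EuclideanSpace 𝕜 n) :
    inner 𝕜 (hH.eigenvectorBasis i) (H.toEuclideanLin v) =
      hH.eigenvalues i * inner 𝕜 (hH.eigenvectorBasis i) v := by
  have eigenvector : H.toEuclideanLin (hH.eigenvectorBasis i) =
      (hH.eigenvalues i : 𝕜) • hH.eigenvectorBasis i := by
    ext j
    simpa [RCLike.real_smul_eq_coe_mul] using congrFun (hH.mulVec_eigenvectorBasis i) j
  rw [← isSymmetric_toEuclideanLin_iff.2 hH, eigenvector, inner_smul_left, RCLike.conj_ofReal]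

lemma inner_toEuclideanLin_conjTranspose_mul_self (N : Matrix m n 𝕜) (v : EuclideanSpace 𝕜 n) :
    inner 𝕜 v ((Nᴴ * N).toEuclideanLin v) = (‖N.toEuclideanLin v‖ : 𝕜) ^ 2 := by
  classical
  have comp : (Nᴴ * N).toEuclideanLin v = Nᴴ.toEuclideanLin (N.toEuclideanLin v) := by
    ext; simp
  rw [comp, toEuclideanLin_conjTranspose_eq_adjoint, LinearMap.adjoint_inner_right,
    inner_self_eq_norm_sq_to_K]

lemma norm_toEuclideanLin_sq_eq_sum_eigenvalues (hH : (Nᴴ * N).IsHermitian)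
    (v : EuclideanSpace 𝕜 n) :
    ‖N.toEuclideanLin v‖ ^ 2 =
      ∑ i, hH.eigenvalues i * ‖inner 𝕜 (hH.eigenvectorBasis i) v‖ ^ 2 := by
  rw [← RCLike.ofReal_inj (K := 𝕜)]
  push_cast
  rw [← inner_toEuclideanLin_conjTranspose_mul_self, ← hH.eigenvectorBasis.sum_inner_mul_inner]
  refine Finset.sum_congr rfl fun i _ => ?_
  rw [inner_eigenvectorBasis_toEuclideanLin, mul_left_comm,
    ← inner_conj_symm v, RCLike.conj_mul]

lemma norm_toEuclideanLin_sq_le_of_eigenvalues_le (hH : (Nᴴ * N).IsHermitian) {s : ℝ}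
    (hs : ∀ i, hH.eigenvalues i ≤ s) (v : EuclideanSpace 𝕜 n) :
    ‖N.toEuclideanLin v‖ ^ 2 ≤ s * ‖v‖ ^ 2 := by
  rw [norm_toEuclideanLin_sq_eq_sum_eigenvalues hH,
    ← hH.eigenvectorBasis.sum_sq_norm_inner_right, Finset.mul_sum]
  gcongr with i
  exact hs i

lemma norm_toEuclideanLin_eigenvectorBasis_sq (hH : (Nᴴ * N).IsHermitian) (k : n) :
    ‖N.toEuclideanLin (hH.eigenvectorBasis k)‖ ^ 2 = hH.eigenvalues k := by
  simp [norm_toEuclideanLin_sq_eq_sum_eigenvalues hH, hH.eigenvectorBasis.inner_eq_ite,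
    apply_ite norm, ite_pow]

end GramEigenvalues

section RankOneApproximation

variable {m n : Type*} [Fintype m] [Fintype n] [DecidableEq n] {N : Matrix m n ℂ}

lemma frobSq_sub_vecMulVec_star (N : Matrix m n ℂ) (a : EuclideanSpace ℂ m)
    (v : EuclideanSpace ℂ n) :
    frobSq (N - vecMulVec a.ofLp (star v.ofLp)) =
      frobSq N - 2 * (inner ℂ a (N.toEuclideanLin v)).re + ‖a‖ ^ 2 * ‖v‖ ^ 2 := by
  have cross : inner ℂ a (N.toEuclideanLin v) = ∑ i, ∑ j, N i j * star (a i * star (v j)) := by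
    simp only [PiLp.inner_apply, RCLike.inner_apply, toLpLin_apply, mulVec, dotProduct,
      Finset.sum_mul, star_mul', star_star, starRingEnd_apply, mul_assoc, mul_comm (star (a _))]
  have norms : ‖a‖ ^ 2 * ‖v‖ ^ 2 = ∑ i, ∑ j, Complex.normSq (a i * star (v j)) := by
    simp [EuclideanSpace.norm_sq_eq, Finset.sum_mul_sum, Complex.normSq_eq_norm_sq, mul_pow]
  simp only [cross, norms, frobSq, Complex.re_sum, Finset.mul_sum, ← Finset.sum_sub_distrib,
    ← Finset.sum_add_distrib]
  refine Finset.sum_congr rfl fun i _ => Finset.sum_congr rfl fun j _ => ?_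
  rw [Matrix.sub_apply, vecMulVec_apply, Pi.star_apply, Complex.normSq_sub, Complex.star_def]
  ring

lemma frobSq_sub_le_frobSq_sub_vecMulVec (hH : (Nᴴ * N).IsHermitian) {s : ℝ} (hs₀ : 0 ≤ s)
    (hs : ∀ i, hH.eigenvalues i ≤ s) (a : m → ℂ) (b : n → ℂ) :
    frobSq N - s ≤ frobSq (N - vecMulVec a b) := by
  set x : EuclideanSpace ℂ m := WithLp.toLp 2 a
  set v : EuclideanSpace ℂ n := WithLp.toLp 2 (star b)
  have cauchy_schwarz : (inner ℂ x (N.toEuclideanLin v)).re ≤ ‖x‖ * ‖N.toEuclideanLin v‖ :=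
    re_inner_le_norm (𝕜 := ℂ) x _
  have am_gm : 2 * (‖x‖ * ‖N.toEuclideanLin v‖) ≤ s + ‖x‖ ^ 2 * ‖v‖ ^ 2 := by
    refine two_mul_le_add_of_sq_le_mul hs₀ (by positivity) ?_
    calc (‖x‖ * ‖N.toEuclideanLin v‖) ^ 2 = ‖x‖ ^ 2 * ‖N.toEuclideanLin v‖ ^ 2 := mul_pow ..
      _ ≤ ‖x‖ ^ 2 * (s * ‖v‖ ^ 2) := by
        gcongr
        exact norm_toEuclideanLin_sq_le_of_eigenvalues_le hH hs v
      _ = s * (‖x‖ ^ 2 * ‖v‖ ^ 2) := mul_left_comm ..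
  have expansion : frobSq (N - vecMulVec a b) =
      frobSq N - 2 * (inner ℂ x (N.toEuclideanLin v)).re + ‖x‖ ^ 2 * ‖v‖ ^ 2 := by
    simpa [x, v] using frobSq_sub_vecMulVec_star N x v
  linarith

lemma frobSq_sub_vecMulVec_toEuclideanLin (N : Matrix m n ℂ) {v : EuclideanSpace ℂ n}
    (hv : ‖v‖ = 1) :
    frobSq (N - vecMulVec (N.toEuclideanLin v).ofLp (star v.ofLp)) =
      frobSq N - ‖N.toEuclideanLin v‖ ^ 2 := by
  have cross : (inner ℂ (N.toEuclideanLin v) (N.toEuclideanLin v)).re =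
      ‖N.toEuclideanLin v‖ ^ 2 := inner_self_eq_norm_sq (𝕜 := ℂ) _
  rw [frobSq_sub_vecMulVec_star, cross, hv]
  ring

lemma exists_frobSq_sub_vecMulVec_eq_sub_eigenvalue (hH : (Nᴴ * N).IsHermitian) (k : n) :
    ∃ (a : m → ℂ) (b : n → ℂ), frobSq (N - vecMulVec a b) = frobSq N - hH.eigenvalues k := by
  refine ⟨_, _, (frobSq_sub_vecMulVec_toEuclideanLin N
    (hH.eigenvectorBasis.norm_eq_one k)).trans ?_⟩
  rw [norm_toEuclideanLin_eigenvectorBasis_sq]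

end RankOneApproximation

section Rearrangement

variable {p q : ℕ}

lemma frobSq_rearrange (S : Matrix (Fin p × Fin q) (Fin p × Fin q) ℂ) :
    frobSq (rearrange S) = frobSq S := by
  simp only [frobSq, rearrange, Fintype.sum_prod_type, of_apply]
  refine Finset.sum_congr rfl fun i _ => ?_
  rw [Finset.sum_comm_cycle]

lemma rearrange_sub (S T : Matrix (Fin p × Fin q) (Fin p × Fin q) ℂ) :
    rearrange (S - T) = rearrange S - rearrange T :=
  rfl

lemma rearrange_kronecker (A : Matrix (Fin p) (Fin p) ℂ) (B : Matrix (Fin q) (Fin q) ℂ) :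
    rearrange (A ⊗ₖ B) = vecMulVec (vec Aᵀ) (vec B) :=
  rfl

lemma frobSq_sub_kronecker_s12 (S : Matrix (Fin p × Fin q) (Fin p × Fin q) ℂ)
    (A : Matrix (Fin p) (Fin p) ℂ) (B : Matrix (Fin q) (Fin q) ℂ) :
    frobSq (S - A ⊗ₖ B) = frobSq (rearrange S - vecMulVec (vec Aᵀ) (vec B)) := by
  rw [← rearrange_kronecker, ← rearrange_sub, frobSq_rearrange]

end Rearrangement

/-- The minimum of the unconstrained Kronecker approximation problem is ‖S‖_F² − σ₁²,
where σ₁² is the largest eigenvalue of R(S)ᴴR(S) (the squared largest singular value of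
the rearranged matrix R(S)): the bound holds for all A, B and is attained. -/
theorem kronecker_approx_min_eq_frobSq_sub_sigma1sq {p q : ℕ}
    (S : Matrix (Fin p × Fin q) (Fin p × Fin q) ℂ) (s1sq : ℝ)
    (hH : ((rearrange S)ᴴ * rearrange S).IsHermitian)
    (hub : ∀ i, hH.eigenvalues i ≤ s1sq)
    (hattained : ∃ i, hH.eigenvalues i = s1sq) :
    (∀ (A : Matrix (Fin p) (Fin p) ℂ) (B : Matrix (Fin q) (Fin q) ℂ),
      frobSq S - s1sq ≤ frobSq (S - A ⊗ₖ B)) ∧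
    (∃ (Ahat : Matrix (Fin p) (Fin p) ℂ) (Bhat : Matrix (Fin q) (Fin q) ℂ),
      frobSq (S - Ahat ⊗ₖ Bhat) = frobSq S - s1sq) := by
  obtain ⟨k, rfl⟩ := hattained
  refine ⟨fun A B => ?_, ?_⟩
  · have eigenvalue_nonneg : 0 ≤ hH.eigenvalues k := by
      rw [← norm_toEuclideanLin_eigenvectorBasis_sq hH k]
      positivity
    rw [frobSq_sub_kronecker_s12, ← frobSq_rearrange S]
    exact frobSq_sub_le_frobSq_sub_vecMulVec hH eigenvalue_nonneg hub _ _
  · obtain ⟨a, b, hab⟩ := exists_frobSq_sub_vecMulVec_eq_sub_eigenvalue hH k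
    obtain ⟨A, rfl⟩ := vec_bijective.surjective a
    obtain ⟨B, rfl⟩ := vec_bijective.surjective b
    refine ⟨Aᵀ, B, ?_⟩
    rw [frobSq_sub_kronecker_s12, transpose_transpose, hab, frobSq_rearrange]
end
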